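/- Let N ≥ 1, let Ω ⊆ ℝ^N be open, let p : Ω → ℝ satisfy p(x) > 1 for all x, and let A : Ω × ℝ^N → ℝ be such that for every x ∈ Ω the map ξ ↦ A(x,ξ) is strictly convex, positively p(x)-homogeneous, and differentiable on ℝ^N. Let r ≥ 1 be a real number and let v, v₀ : Ω → ℝ be positive differentiable functions. Then for every x₀ ∈ Ω at which ∇(v₀^(1/r))(x₀) ≠ 0 one has (1/p(x₀)) · ⟨∇_ξ A(x₀, ∇(v₀^(1/r))(x₀)), ∇(v / v₀^((r−1)/r))(x₀)⟩ ≤ A(x₀, ∇(v^(1/r))(x₀))^(r/p(x₀)) · A(x₀, ∇(v₀^(1/r))(x₀))^((p(x₀)−r)/p(x₀)). (Picone identity for variable exponent operators.) -/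

import Mathlib

open Real
open scoped RealInnerProductSpace

/-!
Put `u = v ^ (1/r)` and `u₀ = v₀ ^ (1/r)`. The quotient `v / v₀ ^ ((r-1)/r)` equals
`u ^ r / u₀ ^ (r-1)`, so its gradient is `r s ^ (r-1) ∇u - (r-1) s ^ r ∇u₀` with `s = u / u₀`.
Pairing with `∇A(∇u₀)`, Euler's identity evaluates the second term. For the first one, comparing
`A (t ∇u)` with the tangent plane of `A` at `∇u₀` and optimizing in `t > 0` gives the
Cauchy–Schwarz type bound `⟪∇A ξ, η⟫ ≤ p A(ξ) ^ ((p-1)/p) A(η) ^ (1/p)`. What remains is Young's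
inequality `r a ^ (r-1) b ≤ (r-1) a ^ r + b ^ r`.
-/

section RealInequalities

variable {p r s a b d : ℝ}

lemma mul_rpow_sub_one_mul_le (hr : 1 ≤ r) (ha : 0 ≤ a) (hb : 0 ≤ b) :
    r * a ^ (r - 1) * b ≤ (r - 1) * a ^ r + b ^ r := by
  have hr₀ : 0 < r := by linarith
  have am_gm : (a ^ r) ^ ((r - 1) / r) * (b ^ r) ^ (1 / r) ≤
      (r - 1) / r * a ^ r + 1 / r * b ^ r :=
    geom_mean_le_arith_mean2_weighted (div_nonneg (by linarith) hr₀.le) (by positivity)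
      (by positivity) (by positivity) (by field_simp; ring)
  rw [← rpow_mul ha, ← rpow_mul hb, mul_div_cancel₀ _ hr₀.ne', mul_one_div_cancel hr₀.ne',
    rpow_one] at am_gm
  calc r * a ^ (r - 1) * b = r * (a ^ (r - 1) * b) := mul_assoc _ _ _
    _ ≤ r * ((r - 1) / r * a ^ r + 1 / r * b ^ r) := by gcongr
    _ = (r - 1) * a ^ r + b ^ r := by field_simp

lemma le_mul_rpow_mul_rpow_of_forall_of_pos (hp : p ≠ 0) (ha : 0 < a) (hb : 0 < b)
    (h : ∀ t : ℝ, 0 < t → t * d ≤ (p - 1) * a + t ^ p * b) :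
    d ≤ p * (a ^ ((p - 1) / p) * b ^ (1 / p)) := by
  -- The bound is attained where `t ^ p * b = a`.
  have ht : 0 < (a / b) ^ (1 / p) := by positivity
  have h_opt : (a / b) ^ (1 / p) * d ≤ p * a := by
    have := h _ ht
    rwa [← rpow_mul (by positivity), one_div_mul_cancel hp, rpow_one, div_mul_cancel₀ _ hb.ne',
      sub_one_mul, sub_add_cancel] at this
  calc d ≤ p * a / (a / b) ^ (1 / p) := by rwa [le_div_iff₀' ht]
    _ = p * (a ^ ((p - 1) / p) * b ^ (1 / p)) := by
      rw [div_rpow ha.le hb.le, sub_div, div_self hp, rpow_sub ha, rpow_one]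
      field_simp

lemma le_mul_rpow_mul_rpow_of_forall (hp : 1 ≤ p) (ha : 0 ≤ a) (hb : 0 ≤ b)
    (h : ∀ t : ℝ, 0 < t → t * d ≤ (p - 1) * a + t ^ p * b) :
    d ≤ p * (a ^ ((p - 1) / p) * b ^ (1 / p)) := by
  have hp₀ : 0 < p := by linarith
  have hp₁ : 0 ≤ p - 1 := by linarith
  have h_lim : Filter.Tendsto
      (fun ε : ℝ => p * ((a + ε) ^ ((p - 1) / p) * (b + ε) ^ (1 / p)))
      (nhdsWithin 0 (Set.Ioi 0)) (nhds (p * (a ^ ((p - 1) / p) * b ^ (1 / p)))) := by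
    have h_cont : Continuous
        (fun ε : ℝ => p * ((a + ε) ^ ((p - 1) / p) * (b + ε) ^ (1 / p))) :=
      continuous_const.mul <|
        ((continuous_const_add a).rpow_const fun _ => Or.inr (div_nonneg hp₁ hp₀.le)).mul
          ((continuous_const_add b).rpow_const fun _ => Or.inr (by positivity))
    simpa only [add_zero] using (h_cont.tendsto 0).mono_left nhdsWithin_le_nhds
  refine ge_of_tendsto h_lim ?_
  filter_upwards [self_mem_nhdsWithin] with ε (hε : 0 < ε)
  refine le_mul_rpow_mul_rpow_of_forall_of_pos hp₀.ne' (by positivity) (by positivity)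
    fun t ht => ?_
  calc t * d ≤ (p - 1) * a + t ^ p * b := h t ht
    _ ≤ (p - 1) * (a + ε) + t ^ p * (b + ε) := by gcongr <;> linarith

lemma rpow_add_div {m k : ℝ} (hp : 0 < p) (ha : 0 ≤ a) (hm : 0 ≤ m) (hk : k < 0 → a ≠ 0) :
    a ^ ((m + k) / p) = (a ^ (1 / p)) ^ m * a ^ (k / p) := by
  rw [← rpow_mul ha, one_div_mul_eq_div, add_div]
  rcases le_or_gt 0 k with h | h
  · exact rpow_add_of_nonneg ha (by positivity) (by positivity)
  · exact rpow_add (ha.lt_of_ne' (hk h)) _ _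

lemma mul_rpow_sub_one_mul_sub_le (hp : 0 < p) (hr : 1 ≤ r) (hs : 0 ≤ s) (ha : 0 ≤ a)
    (hb : 0 ≤ b) (hpr : p < r → a ≠ 0) :
    r * s ^ (r - 1) * (a ^ ((p - 1) / p) * b ^ (1 / p)) - (r - 1) * s ^ r * a ≤
      b ^ (r / p) * a ^ ((p - r) / p) := by
  have hα : 0 ≤ a ^ (1 / p) := by positivity
  have hk : p - r < 0 → a ≠ 0 := fun h => hpr (sub_neg.1 h)
  have h_sub_one : a ^ ((p - 1) / p) = (a ^ (1 / p)) ^ (r - 1) * a ^ ((p - r) / p) := by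
    rw [← rpow_add_div hp ha (sub_nonneg.2 hr) hk, sub_add_sub_cancel']
  have h_self : a = (a ^ (1 / p)) ^ r * a ^ ((p - r) / p) := by
    rw [← rpow_add_div hp ha (by linarith) hk, add_sub_cancel,
      div_self hp.ne', rpow_one]
  have h_young := mul_rpow_sub_one_mul_le hr (mul_nonneg hs hα) (rpow_nonneg hb (1 / p))
  rw [mul_rpow hs hα, mul_rpow hs hα, ← rpow_mul hb, one_div_mul_eq_div,
    ← sub_le_iff_le_add'] at h_young
  calc r * s ^ (r - 1) * (a ^ ((p - 1) / p) * b ^ (1 / p)) - (r - 1) * s ^ r * a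
      = (r * (s ^ (r - 1) * (a ^ (1 / p)) ^ (r - 1)) * b ^ (1 / p) -
          (r - 1) * (s ^ r * (a ^ (1 / p)) ^ r)) * a ^ ((p - r) / p) := by
        rw [h_sub_one]
        nth_rw 3 [h_self]
        ring
    _ ≤ b ^ (r / p) * a ^ ((p - r) / p) := by gcongr

end RealInequalities

lemma add_fderiv_sub_le_of_convexOn {E : Type*} [NormedAddCommGroup E] [NormedSpace ℝ E]
    {S : Set E} {f : E → ℝ} {x y : E} (hf : ConvexOn ℝ S f) (hx : x ∈ S) (hy : y ∈ S)
    (hd : DifferentiableAt ℝ f x) : f x + fderiv ℝ f x (y - x) ≤ f y := by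
  have h_line := hf.comp_affineMap (AffineMap.lineMap (k := ℝ) x y)
  have h_deriv : HasDerivAt (f ∘ AffineMap.lineMap (k := ℝ) x y) (fderiv ℝ f x (y - x)) 0 :=
    HasFDerivAt.comp_hasDerivAt (0 : ℝ) (by simpa using hd.hasFDerivAt)
      AffineMap.hasDerivAt_lineMap
  have h_slope := h_line.le_slope_of_hasDerivAt (by simpa using hx) (by simpa using hy)
    zero_lt_one h_deriv
  simp only [slope_def_field, Function.comp_apply, AffineMap.lineMap_apply_zero,
    AffineMap.lineMap_apply_one, sub_zero, div_one] at h_slope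
  linarith

/-- Positive homogeneity of degree `p`: `A (t • ξ) = t ^ p * A ξ` for all `t ≥ 0`, with the real
power of `t` (so that `0 ^ p = 0` when `p ≠ 0`). This is the structural assumption on the
integrand `A(x, ·)`, with `p = p(x)`. -/
def IsPosHomogeneous {E : Type*} [SMul ℝ E] (p : ℝ) (A : E → ℝ) : Prop :=
  ∀ t : ℝ, 0 ≤ t → ∀ ξ : E, A (t • ξ) = t ^ p * A ξ

namespace IsPosHomogeneous

section Module

variable {E : Type*} [AddCommMonoid E] [Module ℝ E] {p : ℝ} {A : E → ℝ}

lemma map_zero (hA : IsPosHomogeneous p A) (hp : p ≠ 0) : A 0 = 0 := by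
  simpa [zero_rpow hp] using hA 0 le_rfl 0

lemma nonneg_of_convexOn (hA : IsPosHomogeneous p A) (hp : 1 < p)
    (hconv : ConvexOn ℝ Set.univ A) (ξ : E) : 0 ≤ A ξ := by
  have h_mid := hconv.2 (Set.mem_univ ξ) (Set.mem_univ 0)
    (one_half_pos (α := ℝ)).le one_half_pos.le (add_halves 1)
  rw [smul_zero, add_zero, hA.map_zero (by linarith), smul_zero, add_zero, smul_eq_mul,
    hA _ one_half_pos.le] at h_mid
  have h_pow : (1 / 2 : ℝ) ^ p < 1 / 2 := rpow_lt_self_of_lt_one (by norm_num) (by norm_num) hp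
  exact (mul_nonneg_iff_of_pos_left (sub_pos.2 h_pow)).1 (by linarith)

lemma pos_of_strictConvexOn (hA : IsPosHomogeneous p A) (hp : 1 < p)
    (hconv : StrictConvexOn ℝ Set.univ A) {ξ : E} (hξ : ξ ≠ 0) : 0 < A ξ := by
  have h_mid := hconv.2 (Set.mem_univ ξ) (Set.mem_univ 0) hξ
    (one_half_pos (α := ℝ)) one_half_pos (add_halves 1)
  rw [smul_zero, add_zero, hA.map_zero (by linarith), smul_zero, add_zero, smul_eq_mul] at h_mid
  linarith [hA.nonneg_of_convexOn hp hconv.convexOn ((1 / 2 : ℝ) • ξ)]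

end Module

section NormedSpace

variable {E : Type*} [NormedAddCommGroup E] [NormedSpace ℝ E] {p : ℝ} {A : E → ℝ} {ξ : E}

lemma fderiv_apply_self (hA : IsPosHomogeneous p A) (hd : DifferentiableAt ℝ A ξ) :
    fderiv ℝ A ξ ξ = p * A ξ := by
  have h_ray : HasDerivAt (fun t : ℝ => A (t • ξ)) (fderiv ℝ A ξ ξ) 1 := by
    have h_smul : HasDerivAt (fun t : ℝ => t • ξ) ξ 1 := by
      simpa using (hasDerivAt_id (1 : ℝ)).smul_const ξ
    exact HasFDerivAt.comp_hasDerivAt (1 : ℝ) (by simpa using hd.hasFDerivAt) h_smul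
  have h_pow : HasDerivAt (fun t : ℝ => t ^ p * A ξ) (p * A ξ) 1 := by
    simpa using (hasDerivAt_rpow_const (x := 1) (p := p) (Or.inl one_ne_zero)).mul_const (A ξ)
  refine h_ray.unique (h_pow.congr_of_eventuallyEq ?_)
  filter_upwards [lt_mem_nhds (zero_lt_one' ℝ)] with t ht using hA t ht.le ξ

lemma fderiv_apply_le_mul_rpow_mul_rpow (hA : IsPosHomogeneous p A) (hp : 1 ≤ p)
    (hconv : ConvexOn ℝ Set.univ A) (hnonneg : ∀ ζ, 0 ≤ A ζ) (hd : DifferentiableAt ℝ A ξ) (η : E) :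
    fderiv ℝ A ξ η ≤ p * (A ξ ^ ((p - 1) / p) * A η ^ (1 / p)) := by
  refine le_mul_rpow_mul_rpow_of_forall hp (hnonneg ξ) (hnonneg η) fun t ht => ?_
  have h_tangent := add_fderiv_sub_le_of_convexOn hconv (Set.mem_univ ξ) (Set.mem_univ (t • η)) hd
  rw [map_sub, map_smul, smul_eq_mul, hA.fderiv_apply_self hd, hA t ht.le] at h_tangent
  linarith

end NormedSpace

end IsPosHomogeneous

section Gradient

variable {E : Type*} [NormedAddCommGroup E] [InnerProductSpace ℝ E] [CompleteSpace E]
  {r : ℝ} {x : E}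

lemma hasGradientAt_rpow_div_rpow {u u₀ : E → ℝ} {η ξ : E} (hu : HasGradientAt u η x)
    (hu₀ : HasGradientAt u₀ ξ x) (hux : 0 < u x) (hu₀x : 0 < u₀ x) :
    HasGradientAt (fun y => u y ^ r / u₀ y ^ (r - 1))
      ((r * (u x / u₀ x) ^ (r - 1)) • η - ((r - 1) * (u x / u₀ x) ^ r) • ξ) x := by
  have h_quot := (hu.hasFDerivAt.rpow_const (p := r) (Or.inl hux.ne')).mul
    (hu₀.hasFDerivAt.rpow_const (p := -(r - 1)) (Or.inl hu₀x.ne'))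
  have h_eq : (fun y => u y ^ r / u₀ y ^ (r - 1)) =ᶠ[nhds x]
      fun y => u y ^ r * u₀ y ^ (-(r - 1)) := by
    filter_upwards [hu₀.continuousAt.eventually_const_lt hu₀x] with y hy
    rw [rpow_neg hy.le, div_eq_mul_inv]
  rw [hasGradientAt_iff_hasFDerivAt]
  refine (h_quot.congr_of_eventuallyEq h_eq).congr_fderiv ?_
  rw [map_sub, map_smulₛₗ, map_smulₛₗ, div_rpow hux.le hu₀x.le, div_rpow hux.le hu₀x.le,
    show -(r - 1) - 1 = -r by ring, rpow_neg hu₀x.le, rpow_neg hu₀x.le]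
  simp only [conj_trivial]
  module

lemma gradient_div_rpow {v v₀ : E → ℝ} (hr : r ≠ 0) (hv : 0 < v x) (hv₀ : 0 < v₀ x)
    (hvd : DifferentiableAt ℝ v x) (hv₀d : DifferentiableAt ℝ v₀ x) :
    gradient (fun y => v y / v₀ y ^ ((r - 1) / r)) x =
      (r * (v x ^ (1 / r) / v₀ x ^ (1 / r)) ^ (r - 1)) • gradient (fun y => v y ^ (1 / r)) x -
        ((r - 1) * (v x ^ (1 / r) / v₀ x ^ (1 / r)) ^ r) •
          gradient (fun y => v₀ y ^ (1 / r)) x := by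
  have h_root := hasGradientAt_rpow_div_rpow (r := r)
    (hvd.rpow_const (p := 1 / r) (Or.inl hv.ne')).hasGradientAt
    (hv₀d.rpow_const (p := 1 / r) (Or.inl hv₀.ne')).hasGradientAt
    (rpow_pos_of_pos hv _) (rpow_pos_of_pos hv₀ _)
  refine (h_root.congr_of_eventuallyEq ?_).gradient
  filter_upwards [hvd.continuousAt.eventually_const_lt hv,
    hv₀d.continuousAt.eventually_const_lt hv₀] with y hy hy₀
  rw [← rpow_mul hy.le, ← rpow_mul hy₀.le, one_div_mul_cancel hr, rpow_one, one_div_mul_eq_div]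

theorem picone_identity_variable_exponent_general {p : ℝ} {A v v₀ : E → ℝ} (hp : 1 ≤ p)
    (hA : IsPosHomogeneous p A) (hconv : ConvexOn ℝ Set.univ A) (hnonneg : ∀ ξ, 0 ≤ A ξ)
    (hd : DifferentiableAt ℝ A (gradient (fun y => v₀ y ^ (1 / r)) x))
    (hr : 1 ≤ r) (hv : 0 < v x) (hv₀ : 0 < v₀ x)
    (hvd : DifferentiableAt ℝ v x) (hv₀d : DifferentiableAt ℝ v₀ x)
    (hpr : p < r → A (gradient (fun y => v₀ y ^ (1 / r)) x) ≠ 0) :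
    1 / p * ⟪gradient A (gradient (fun y => v₀ y ^ (1 / r)) x),
        gradient (fun y => v y / v₀ y ^ ((r - 1) / r)) x⟫ ≤
      A (gradient (fun y => v y ^ (1 / r)) x) ^ (r / p) *
        A (gradient (fun y => v₀ y ^ (1 / r)) x) ^ ((p - r) / p) := by
  have hp₀ : 0 < p := by linarith
  rw [gradient_div_rpow (by linarith) hv hv₀ hvd hv₀d]
  set η := gradient (fun y => v y ^ (1 / r)) x
  set ξ := gradient (fun y => v₀ y ^ (1 / r)) x
  have hs : 0 < v x ^ (1 / r) / v₀ x ^ (1 / r) := by positivity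
  set s := v x ^ (1 / r) / v₀ x ^ (1 / r)
  rw [inner_gradient_left, map_sub, map_smul, map_smul, smul_eq_mul, smul_eq_mul,
    hA.fderiv_apply_self hd]
  calc 1 / p * (r * s ^ (r - 1) * fderiv ℝ A ξ η - (r - 1) * s ^ r * (p * A ξ))
      = r * s ^ (r - 1) * (fderiv ℝ A ξ η / p) - (r - 1) * s ^ r * A ξ := by field_simp
    _ ≤ r * s ^ (r - 1) * (A ξ ^ ((p - 1) / p) * A η ^ (1 / p)) - (r - 1) * s ^ r * A ξ := by
      gcongr
      exact (div_le_iff₀' hp₀).2 (hA.fderiv_apply_le_mul_rpow_mul_rpow hp hconv hnonneg hd η)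
    _ ≤ A η ^ (r / p) * A ξ ^ ((p - r) / p) :=
      mul_rpow_sub_one_mul_sub_le hp₀ hr hs.le (hnonneg ξ) (hnonneg η) hpr

end Gradient

theorem picone_identity_variable_exponent
    (N : ℕ) (hN : 1 ≤ N)
    (Ω : Set (EuclideanSpace ℝ (Fin N))) (hΩ : IsOpen Ω)
    (p : EuclideanSpace ℝ (Fin N) → ℝ) (hp : ∀ x ∈ Ω, 1 < p x)
    (A : EuclideanSpace ℝ (Fin N) → EuclideanSpace ℝ (Fin N) → ℝ)
    (hconv : ∀ x ∈ Ω, StrictConvexOn ℝ Set.univ (A x))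
    (hhom : ∀ x ∈ Ω, ∀ t : ℝ, 0 ≤ t → ∀ ξ : EuclideanSpace ℝ (Fin N),
      A x (t • ξ) = t ^ (p x) * A x ξ)
    (hdiff : ∀ x ∈ Ω, Differentiable ℝ (A x))
    (r : ℝ) (hr : 1 ≤ r)
    (v v₀ : EuclideanSpace ℝ (Fin N) → ℝ)
    (hv : ∀ x ∈ Ω, 0 < v x) (hv₀ : ∀ x ∈ Ω, 0 < v₀ x)
    (hvd : ∀ x ∈ Ω, DifferentiableAt ℝ v x) (hv₀d : ∀ x ∈ Ω, DifferentiableAt ℝ v₀ x) :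
    ∀ x₀ ∈ Ω, gradient (fun x => (v₀ x) ^ (1/r)) x₀ ≠ 0 →
      (1 / p x₀) *
        ⟪gradient (A x₀) (gradient (fun x => (v₀ x) ^ (1/r)) x₀),
          gradient (fun x => v x / (v₀ x) ^ ((r - 1)/r)) x₀⟫
      ≤ (A x₀ (gradient (fun x => (v x) ^ (1/r)) x₀)) ^ (r / p x₀) *
        (A x₀ (gradient (fun x => (v₀ x) ^ (1/r)) x₀)) ^ ((p x₀ - r) / p x₀) := by
  intro x hx hne
  have hA : IsPosHomogeneous (p x) (A x) := hhom x hx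
  have hnonneg := hA.nonneg_of_convexOn (hp x hx) (hconv x hx).convexOn
  have hpos := hA.pos_of_strictConvexOn (hp x hx) (hconv x hx) hne
  exact picone_identity_variable_exponent_general (hp x hx).le hA (hconv x hx).convexOn hnonneg
    (hdiff x hx _) hr (hv x hx) (hv₀ x hx) (hvd x hx) (hv₀d x hx) fun _ => hpos.ne'
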